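/- Let n be a positive natural number and let S, F, φ be n × n real matrices, regarded with the Frobenius inner product. Let c be a real number, let b' be a real number with b' > 1/4, and set k := 4b' − 1. If ‖S − (1/k)·φ‖ ≥ (2·√b' / k)·‖φ‖, then (1/2)·‖S + F + φ + (c/2)·I‖² − (1/2)·‖φ‖² − ⟪S, φ⟫ + (2b' − 1/2)·‖S‖² ≥ 0. -/

import Mathlib

open scoped Matrix

attribute [local instance] Matrix.frobeniusNormedAddCommGroup

/-!
Multiplied by `k` and squared, the hypothesis reads `(k + 1) ‖φ‖² ≤ ‖k S - φ‖²`, because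
`(2 √b')² = k + 1`. Expanding the right-hand side and dividing by `k` turns it into
`‖φ‖² + 2 ⟪S, φ⟫ ≤ k ‖S‖²`; half of this says that the terms other than the leading square
already have a nonnegative sum.
-/

section InnerProductSpace

open scoped RealInnerProductSpace

variable {E : Type*} [SeminormedAddCommGroup E] [InnerProductSpace ℝ E]

theorem sqrt_add_one_mul_norm_le_norm_smul_sub_iff {k : ℝ} (hk : 0 < k) (x y : E) :
    √(k + 1) * ‖y‖ ≤ ‖k • x - y‖ ↔ ‖y‖ ^ 2 + 2 * ⟪x, y⟫ ≤ k * ‖x‖ ^ 2 := by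
  have lhs_sq : (√(k + 1) * ‖y‖) ^ 2 = (k + 1) * ‖y‖ ^ 2 := by
    rw [mul_pow, Real.sq_sqrt (by positivity)]
  have rhs_sq : ‖k • x - y‖ ^ 2 = k ^ 2 * ‖x‖ ^ 2 - 2 * (k * ⟪x, y⟫) + ‖y‖ ^ 2 := by
    rw [norm_sub_sq_real, real_inner_smul_left, norm_smul, mul_pow, Real.norm_eq_abs, sq_abs]
  have sq_sub_sq : ‖k • x - y‖ ^ 2 - (√(k + 1) * ‖y‖) ^ 2
      = k * (k * ‖x‖ ^ 2 - (‖y‖ ^ 2 + 2 * ⟪x, y⟫)) := by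
    rw [lhs_sq, rhs_sq]
    ring
  rw [← sq_le_sq₀ (by positivity) (norm_nonneg _), ← sub_nonneg, sq_sub_sq,
    mul_nonneg_iff_of_pos_left hk, sub_nonneg]

theorem evolution_terms_nonneg_general (S T φ : E) {b' k : ℝ} (hb : 1 / 4 < b')
    (hk : k = 4 * b' - 1) (h : 2 * √b' / k * ‖φ‖ ≤ ‖S - (1 / k) • φ‖) :
    0 ≤ (1 / 2) * ‖T‖ ^ 2 - (1 / 2) * ‖φ‖ ^ 2 - ⟪S, φ⟫ + (2 * b' - 1 / 2) * ‖S‖ ^ 2 := by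
  have k_pos : 0 < k := by linarith
  have two_mul_sqrt : 2 * √b' = √(k + 1) := by
    rw [show k + 1 = 2 ^ 2 * b' by linarith, Real.sqrt_mul (by positivity),
      Real.sqrt_sq zero_le_two]
  have h_scaled : √(k + 1) * ‖φ‖ ≤ ‖k • S - φ‖ :=
    calc √(k + 1) * ‖φ‖ = k * (2 * √b' / k * ‖φ‖) := by rw [two_mul_sqrt]; field_simp
      _ ≤ k * ‖S - (1 / k) • φ‖ := by gcongr
      _ = ‖k • S - φ‖ := by
        rw [← norm_smul_of_nonneg k_pos.le, smul_sub, smul_smul, mul_one_div_cancel k_pos.ne',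
          one_smul]
  have h_expanded : ‖φ‖ ^ 2 + 2 * ⟪S, φ⟫ ≤ (4 * b' - 1) * ‖S‖ ^ 2 :=
    hk ▸ (sqrt_add_one_mul_norm_le_norm_smul_sub_iff k_pos S φ).mp h_scaled
  linarith [sq_nonneg ‖T‖]

end InnerProductSpace

section Frobenius

variable {𝕜 m n : Type*} [RCLike 𝕜] [Fintype m] [Fintype n]

theorem frobenius_norm_sq_eq_re_trace (A : Matrix m n 𝕜) :
    ‖A‖ ^ 2 = RCLike.re (Aᴴ * A).trace := by
  rw [← Matrix.star_vec_dotProduct_vec, Matrix.frobenius_norm_def, ← Real.sqrt_eq_rpow,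
    Real.sq_sqrt (by positivity), Finset.sum_comm]
  simp only [dotProduct, Fintype.sum_prod_type, Pi.star_apply, Matrix.vec, map_sum,
    ← starRingEnd_apply, RCLike.conj_mul, ← RCLike.ofReal_pow, RCLike.ofReal_re, Real.rpow_two]

/-- The Frobenius inner product `⟪A, B⟫ = tr (Aᴴ B)` on rectangular matrices. It is built on
Mathlib's Frobenius norm, so that norms of matrices keep their meaning. -/
noncomputable abbrev frobeniusInnerProductSpace : InnerProductSpace 𝕜 (Matrix m n 𝕜) where
  __ := Matrix.frobeniusNormedSpace
  inner A B := (Aᴴ * B).trace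
  norm_sq_eq_re_inner := frobenius_norm_sq_eq_re_trace
  conj_inner_symm A B := by
    rw [starRingEnd_apply, ← Matrix.trace_conjTranspose, Matrix.conjTranspose_mul,
      Matrix.conjTranspose_conjTranspose]
  add_left A B C := by
    rw [Matrix.conjTranspose_add, Matrix.add_mul, Matrix.trace_add]
  smul_left A B r := by
    rw [Matrix.conjTranspose_smul, Matrix.smul_mul, Matrix.trace_smul, smul_eq_mul,
      starRingEnd_apply]

end Frobenius

/-- Pointwise form of the combination of terms in the evolution formula for
`λ_{a'}^{b'}` whose nonnegativity yields that `λ_{a'}^{b'}(t) + n(a+c)²t/8` is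
nondecreasing along the extended Ricci flow.  Here `(Sᵀ * φ).trace` is the
Frobenius inner product `⟪S, φ⟫` of real matrices. -/
theorem evolution_terms_nonneg (n : ℕ) (hn : 0 < n)
    (S F φ : Matrix (Fin n) (Fin n) ℝ) (c : ℝ)
    (b' : ℝ) (hb : 1 / 4 < b') (k : ℝ) (hk : k = 4 * b' - 1)
    (h : ‖S - (1 / k) • φ‖ ≥ (2 * Real.sqrt b' / k) * ‖φ‖) :
    0 ≤ (1 / 2) * ‖S + F + φ + (c / 2) • (1 : Matrix (Fin n) (Fin n) ℝ)‖ ^ 2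
        - (1 / 2) * ‖φ‖ ^ 2 - (Sᵀ * φ).trace + (2 * b' - 1 / 2) * ‖S‖ ^ 2 := by
  let _ : InnerProductSpace ℝ (Matrix (Fin n) (Fin n) ℝ) := frobeniusInnerProductSpace
  rw [← Matrix.conjTranspose_eq_transpose_of_trivial]
  exact evolution_terms_nonneg_general S (S + F + φ + (c / 2) • 1) φ hb hk h
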